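/- Let ε be a real number with 0 < ε ≤ 1/4. Let y, y' be unit vectors in a real inner product space and let a, b be nonzero vectors (in a possibly different real inner product space) with ‖a‖ = ‖b‖ ≤ 1 + ε/8 and ‖a − b‖ ≥ (1 − ε/8)·‖y − y'‖. Then sin(∠(a, b)/2) ≥ (1 − ε/2)·sin(∠(y, y')/2). -/

import Mathlib

/-!
Vectors `x`, `y` of equal norm span a chord of length `2 ‖x‖ sin (∠(x, y) / 2)`, so bounds on norms
and on distances become bounds on sines of half angles. The loss incurred here is the factor
`(1 - ε / 8) / (1 + ε / 8)`, which is at least `1 - ε / 2`.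
-/

open InnerProductGeometry

section

variable {E F : Type*} [NormedAddCommGroup E] [InnerProductSpace ℝ E]
  [NormedAddCommGroup F] [InnerProductSpace ℝ F]

theorem sin_half_angle_nonneg (x y : E) : 0 ≤ Real.sin (angle x y / 2) :=
  Real.sin_nonneg_of_nonneg_of_le_pi (by linarith [angle_nonneg x y])
    (by linarith [angle_nonneg x y, angle_le_pi x y])

theorem norm_sub_eq_two_mul_norm_mul_sin_half_angle {x y : E} (h : ‖x‖ = ‖y‖) :
    ‖x - y‖ = 2 * ‖x‖ * Real.sin (angle x y / 2) := by
  have half_angle : Real.sin (angle x y / 2) ^ 2 = 1 / 2 - Real.cos (angle x y) / 2 := by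
    rw [Real.sin_sq_eq_half_sub, mul_div_cancel₀ _ two_ne_zero]
  have law_of_cosines :=
    norm_sub_sq_eq_norm_sq_add_norm_sq_sub_two_mul_norm_mul_norm_mul_cos_angle x y
  rw [← h] at law_of_cosines
  have sin_nonneg := sin_half_angle_nonneg x y
  rw [← sq_eq_sq₀ (norm_nonneg _) (by positivity)]
  linear_combination law_of_cosines - 4 * ‖x‖ ^ 2 * half_angle

theorem mul_sin_half_angle_le_of_mul_norm_sub_le {c r : ℝ} {x x' : E} {a b : F}
    (hx : x ≠ 0) (hxx' : ‖x‖ = ‖x'‖) (hab : ‖a‖ = ‖b‖) (har : ‖a‖ ≤ r * ‖x‖)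
    (hc : c * ‖x - x'‖ ≤ ‖a - b‖) :
    c * Real.sin (angle x x' / 2) ≤ r * Real.sin (angle a b / 2) := by
  have two_norm_pos : 0 < 2 * ‖x‖ := by positivity
  refine le_of_mul_le_mul_left ?_ two_norm_pos
  calc
    2 * ‖x‖ * (c * Real.sin (angle x x' / 2)) = c * ‖x - x'‖ := by
      rw [norm_sub_eq_two_mul_norm_mul_sin_half_angle hxx']
      ring
    _ ≤ ‖a - b‖ := hc
    _ = 2 * ‖a‖ * Real.sin (angle a b / 2) := norm_sub_eq_two_mul_norm_mul_sin_half_angle hab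
    _ ≤ 2 * (r * ‖x‖) * Real.sin (angle a b / 2) := by
      gcongr
      exact sin_half_angle_nonneg a b
    _ = 2 * ‖x‖ * (r * Real.sin (angle a b / 2)) := by ring

theorem sin_half_angle_lower_bound_general {ε : ℝ} (hε : 0 ≤ ε) {y y' : E} {a b : F}
    (hy : y ≠ 0) (hyy' : ‖y‖ = ‖y'‖) (hnab : ‖a‖ = ‖b‖) (hna : ‖a‖ ≤ (1 + ε / 8) * ‖y‖)
    (hab : (1 - ε / 8) * ‖y - y'‖ ≤ ‖a - b‖) :
    (1 - ε / 2) * Real.sin (angle y y' / 2) ≤ Real.sin (angle a b / 2) := by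
  have constant_le : (1 + ε / 8) * (1 - ε / 2) ≤ 1 - ε / 8 := by nlinarith
  have one_add_pos : 0 < 1 + ε / 8 := by positivity
  refine le_of_mul_le_mul_left ?_ one_add_pos
  calc
    (1 + ε / 8) * ((1 - ε / 2) * Real.sin (angle y y' / 2))
        = (1 + ε / 8) * (1 - ε / 2) * Real.sin (angle y y' / 2) := (mul_assoc _ _ _).symm
    _ ≤ (1 - ε / 8) * Real.sin (angle y y' / 2) :=
      mul_le_mul_of_nonneg_right constant_le (sin_half_angle_nonneg y y')
    _ ≤ (1 + ε / 8) * Real.sin (angle a b / 2) :=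
      mul_sin_half_angle_le_of_mul_norm_sub_le hy hyy' hnab hna hab

end

theorem sin_half_angle_lower_bound
    {E F : Type*} [NormedAddCommGroup E] [InnerProductSpace ℝ E]
    [NormedAddCommGroup F] [InnerProductSpace ℝ F]
    (ε : ℝ) (hε0 : 0 < ε) (hε : ε ≤ 1/4)
    (y y' : E) (hy : ‖y‖ = 1) (hy' : ‖y'‖ = 1)
    (a b : F) (ha : a ≠ 0) (hb : b ≠ 0)
    (hnab : ‖a‖ = ‖b‖) (hna : ‖a‖ ≤ 1 + ε/8)
    (hab : ‖a - b‖ ≥ (1 - ε/8) * ‖y - y'‖) :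
    Real.sin (angle a b / 2) ≥ (1 - ε/2) * Real.sin (angle y y' / 2) :=
  sin_half_angle_lower_bound_general hε0.le (norm_ne_zero_iff.mp (hy ▸ one_ne_zero))
    (hy.trans hy'.symm) hnab (by rwa [hy, mul_one]) hab
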